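/- Let Ψ : [0,∞)² → [0,∞) satisfy (Ψ1)–(Ψ4) and in addition (Ψ6): for i,j∈{1,2} with j≠i, 2∂ᵢᵢΨ ≤ min(y_j∂ᵢᵢⱼΨ, 0) a.e. on [0,∞)². Let Φ be the loading–unloading density built from Ψ. Then for every fixed z₁,z₂ > 0, each fixed value of the other y-variable, and each l ∈ {1,2}, the map y_l ↦ Φ(y,z) is convex and coincides with a quadratic polynomial on the unloading zone {0 ≤ y_l < z_l}, and is concave on the loading zone {y_l ≥ z_l}. -/

import Mathlib

open MeasureTheory Set

/-- A loading density `Ψ : [0,∞)² → [0,∞)` together with its partial derivatives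
`Ψ₁, Ψ₂, Ψ₁₁, Ψ₂₂, Ψ₁₂, Ψ₁₁₂, Ψ₁₂₂`, satisfying assumptions (Ψ1)–(Ψ4). -/
structure LoadingDensity where
  Ψ : ℝ → ℝ → ℝ
  Ψ₁ : ℝ → ℝ → ℝ
  Ψ₂ : ℝ → ℝ → ℝ
  Ψ₁₁ : ℝ → ℝ → ℝ
  Ψ₂₂ : ℝ → ℝ → ℝ
  Ψ₁₂ : ℝ → ℝ → ℝ
  Ψ₁₁₂ : ℝ → ℝ → ℝ
  Ψ₁₂₂ : ℝ → ℝ → ℝ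
  /-- `Ψ` is `[0,∞)`-valued on the quadrant. -/
  nonneg : ∀ y₁ y₂ : ℝ, 0 ≤ y₁ → 0 ≤ y₂ → 0 ≤ Ψ y₁ y₂
  /-- (Ψ1) -/
  zero : Ψ 0 0 = 0
  /-- (Ψ2): boundedness. -/
  bounded : ∃ M : ℝ, ∀ y₁ y₂ : ℝ, 0 ≤ y₁ → 0 ≤ y₂ → Ψ y₁ y₂ ≤ M
  /-- (Ψ2): Lipschitz continuity. -/
  lipschitz : ∃ L : ℝ, ∀ y₁ y₂ y₁' y₂' : ℝ, 0 ≤ y₁ → 0 ≤ y₂ → 0 ≤ y₁' → 0 ≤ y₂' →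
    |Ψ y₁ y₂ - Ψ y₁' y₂'| ≤ L * (|y₁ - y₁'| + |y₂ - y₂'|)
  /-- `Ψ₁` is the first partial derivative of `Ψ` on `(0,∞)²`. -/
  hasDeriv₁ : ∀ y₁ y₂ : ℝ, 0 < y₁ → 0 < y₂ → HasDerivAt (fun t => Ψ t y₂) (Ψ₁ y₁ y₂) y₁
  /-- `Ψ₂` is the second partial derivative of `Ψ` on `(0,∞)²`. -/
  hasDeriv₂ : ∀ y₁ y₂ : ℝ, 0 < y₁ → 0 < y₂ → HasDerivAt (fun t => Ψ y₁ t) (Ψ₂ y₁ y₂) y₂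
  /-- `Ψ₁₂` is the mixed second partial derivative on `(0,∞)²`. -/
  hasDeriv₁₂ : ∀ y₁ y₂ : ℝ, 0 < y₁ → 0 < y₂ → HasDerivAt (fun t => Ψ₁ y₁ t) (Ψ₁₂ y₁ y₂) y₂
  /-- (Ψ2): `∇Ψ` and `∂₁₂Ψ` are locally Lipschitz on `(0,∞)²`. -/
  gradLocLip : ∀ K : Set (ℝ × ℝ), IsCompact K → K ⊆ Ioi (0:ℝ) ×ˢ Ioi (0:ℝ) →
    ∃ L : ℝ, ∀ p ∈ K, ∀ q ∈ K,
      |Ψ₁ p.1 p.2 - Ψ₁ q.1 q.2| ≤ L * ‖p - q‖ ∧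
      |Ψ₂ p.1 p.2 - Ψ₂ q.1 q.2| ≤ L * ‖p - q‖ ∧
      |Ψ₁₂ p.1 p.2 - Ψ₁₂ q.1 q.2| ≤ L * ‖p - q‖
  /-- a.e. second derivative `Ψ₁₁`. -/
  hasDeriv₁₁ : ∀ᵐ p ∂(volume : Measure (ℝ × ℝ)), 0 < p.1 → 0 < p.2 →
    HasDerivAt (fun t => Ψ₁ t p.2) (Ψ₁₁ p.1 p.2) p.1
  /-- a.e. second derivative `Ψ₂₂`. -/
  hasDeriv₂₂ : ∀ᵐ p ∂(volume : Measure (ℝ × ℝ)), 0 < p.1 → 0 < p.2 →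
    HasDerivAt (fun t => Ψ₂ p.1 t) (Ψ₂₂ p.1 p.2) p.2
  /-- a.e. third derivative `Ψ₁₁₂`. -/
  hasDeriv₁₁₂ : ∀ᵐ p ∂(volume : Measure (ℝ × ℝ)), 0 < p.1 → 0 < p.2 →
    HasDerivAt (fun t => Ψ₁₂ t p.2) (Ψ₁₁₂ p.1 p.2) p.1
  /-- a.e. third derivative `Ψ₁₂₂`. -/
  hasDeriv₁₂₂ : ∀ᵐ p ∂(volume : Measure (ℝ × ℝ)), 0 < p.1 → 0 < p.2 →
    HasDerivAt (fun t => Ψ₁₂ p.1 t) (Ψ₁₂₂ p.1 p.2) p.2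
  /-- (Ψ3): `∂ᵢΨ ≥ max(yᵢ∂ᵢᵢΨ,0)` and `∂₁₂Ψ ≤ min(yᵢ∂ᵢᵢⱼΨ,0)` a.e. on `[0,∞)²`. -/
  psi3 : ∀ᵐ p ∂(volume : Measure (ℝ × ℝ)), 0 ≤ p.1 → 0 ≤ p.2 →
    max (p.1 * Ψ₁₁ p.1 p.2) 0 ≤ Ψ₁ p.1 p.2 ∧
    max (p.2 * Ψ₂₂ p.1 p.2) 0 ≤ Ψ₂ p.1 p.2 ∧
    Ψ₁₂ p.1 p.2 ≤ min (p.1 * Ψ₁₁₂ p.1 p.2) 0 ∧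
    Ψ₁₂ p.1 p.2 ≤ min (p.2 * Ψ₁₂₂ p.1 p.2) 0
  /-- (Ψ4). -/
  psi4 : ∃ M : ℝ, ∀ y₁ y₂ : ℝ, 0 < y₁ → 0 < y₂ → (y₁ + y₂) * |Ψ₁₂ y₁ y₂| ≤ M

/-- The loading–unloading density `Φ` built from a loading density `Ψ`. -/
noncomputable def Phi (L : LoadingDensity) (y₁ y₂ z₁ z₂ : ℝ) : ℝ :=
  if z₁ ≤ y₁ then
    if z₂ ≤ y₂ then L.Ψ y₁ y₂
    else L.Ψ y₁ z₂ - z₂ / 2 * L.Ψ₂ y₁ z₂ * (1 - (y₂ / z₂) ^ 2)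
  else
    if z₂ ≤ y₂ then L.Ψ z₁ y₂ - z₁ / 2 * L.Ψ₁ z₁ y₂ * (1 - (y₁ / z₁) ^ 2)
    else L.Ψ z₁ z₂ - z₁ / 2 * L.Ψ₁ z₁ z₂ * (1 - (y₁ / z₁) ^ 2)
      - z₂ / 2 * L.Ψ₂ z₁ z₂ * (1 - (y₂ / z₂) ^ 2)
      + z₁ * z₂ / 4 * L.Ψ₁₂ z₁ z₂ * (1 - (y₁ / z₁) ^ 2) * (1 - (y₂ / z₂) ^ 2)

open Filter Topology

lemma ld_nonpos_of_ae {X : Type*} [TopologicalSpace X] [MeasurableSpace X] (μ : Measure X)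
    [μ.IsOpenPosMeasure] {s : Set X} (hs : IsOpen s) {f : X → ℝ} (hf : ContinuousOn f s)
    (h : ∀ᵐ x ∂μ, x ∈ s → f x ≤ 0) : ∀ x ∈ s, f x ≤ 0 := by
  intro x hx
  by_contra hc
  push Not at hc
  have ho : IsOpen (s ∩ f ⁻¹' Ioi 0) := hf.isOpen_inter_preimage hs isOpen_Ioi
  have hpos := ho.measure_pos μ ⟨x, hx, hc⟩
  have h0 : μ (s ∩ f ⁻¹' Ioi 0) = 0 := by
    refine measure_mono_null ?_ (ae_iff.1 h)
    rintro y ⟨hy, hy'⟩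
    simp only [mem_ofPred_eq, not_forall, not_le]
    exact ⟨hy, hy'⟩
  exact hpos.ne' h0

namespace LoadingDensity

variable (L : LoadingDensity)

lemma lip_cont (f : ℝ → ℝ → ℝ)
    (h : ∀ K : Set (ℝ × ℝ), IsCompact K → K ⊆ Ioi (0:ℝ) ×ˢ Ioi (0:ℝ) →
      ∃ C : ℝ, ∀ p ∈ K, ∀ q ∈ K, |f p.1 p.2 - f q.1 q.2| ≤ C * ‖p - q‖) :
    ContinuousOn (fun p : ℝ × ℝ => f p.1 p.2) (Ioi (0:ℝ) ×ˢ Ioi (0:ℝ)) := by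
  intro p hp
  apply ContinuousAt.continuousWithinAt
  have hU : Ioi (0:ℝ) ×ˢ Ioi (0:ℝ) ∈ 𝓝 p := (isOpen_Ioi.prod isOpen_Ioi).mem_nhds hp
  obtain ⟨K, hK, hKs, hKc⟩ := LocallyCompactSpace.local_compact_nhds p _ hU
  obtain ⟨C, hC⟩ := h K hKc hKs
  have hl : LipschitzOnWith C.toNNReal (fun p : ℝ × ℝ => f p.1 p.2) K := by
    refine LipschitzOnWith.of_dist_le' fun a ha b hb => ?_
    rw [Real.dist_eq, dist_eq_norm]
    exact hC a ha b hb
  exact hl.continuousOn.continuousAt hK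

lemma lip_sec (f : ℝ → ℝ → ℝ)
    (h : ∀ K : Set (ℝ × ℝ), IsCompact K → K ⊆ Ioi (0:ℝ) ×ˢ Ioi (0:ℝ) →
      ∃ C : ℝ, ∀ p ∈ K, ∀ q ∈ K, |f p.1 p.2 - f q.1 q.2| ≤ C * ‖p - q‖)
    (x a b : ℝ) (hx : 0 < x) (ha : 0 < a) (hab : a ≤ b) :
    AbsolutelyContinuousOnInterval (fun t => f x t) a b := by
  obtain ⟨C, hC⟩ := h ({x} ×ˢ Icc a b) (isCompact_singleton.prod isCompact_Icc) (by
    rintro ⟨u, v⟩ ⟨hu, hv⟩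
    simp only [mem_singleton_iff] at hu
    subst hu
    exact ⟨hx, lt_of_lt_of_le ha hv.1⟩)
  have hl : LipschitzOnWith C.toNNReal (fun t => f x t) (uIcc a b) := by
    rw [uIcc_of_le hab]
    refine LipschitzOnWith.of_dist_le' fun u hu v hv => ?_
    have := hC (x, u) ⟨rfl, hu⟩ (x, v) ⟨rfl, hv⟩
    rw [Real.dist_eq, Real.dist_eq]
    simpa [Prod.norm_def] using this
  exact hl.absolutelyContinuousOnInterval

lemma lip1 : ∀ K : Set (ℝ × ℝ), IsCompact K → K ⊆ Ioi (0:ℝ) ×ˢ Ioi (0:ℝ) →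
    ∃ C : ℝ, ∀ p ∈ K, ∀ q ∈ K, |L.Ψ₁ p.1 p.2 - L.Ψ₁ q.1 q.2| ≤ C * ‖p - q‖ := by
  intro K hK hs
  obtain ⟨C, hC⟩ := L.gradLocLip K hK hs
  exact ⟨C, fun p hp q hq => (hC p hp q hq).1⟩

lemma lip2 : ∀ K : Set (ℝ × ℝ), IsCompact K → K ⊆ Ioi (0:ℝ) ×ˢ Ioi (0:ℝ) →
    ∃ C : ℝ, ∀ p ∈ K, ∀ q ∈ K, |L.Ψ₂ p.1 p.2 - L.Ψ₂ q.1 q.2| ≤ C * ‖p - q‖ := by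
  intro K hK hs
  obtain ⟨C, hC⟩ := L.gradLocLip K hK hs
  exact ⟨C, fun p hp q hq => (hC p hp q hq).2.1⟩

lemma lip12 : ∀ K : Set (ℝ × ℝ), IsCompact K → K ⊆ Ioi (0:ℝ) ×ˢ Ioi (0:ℝ) →
    ∃ C : ℝ, ∀ p ∈ K, ∀ q ∈ K, |L.Ψ₁₂ p.1 p.2 - L.Ψ₁₂ q.1 q.2| ≤ C * ‖p - q‖ := by
  intro K hK hs
  obtain ⟨C, hC⟩ := L.gradLocLip K hK hs
  exact ⟨C, fun p hp q hq => (hC p hp q hq).2.2⟩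

lemma psi2_nonneg (x y : ℝ) (hx : 0 < x) (hy : 0 < y) : 0 ≤ L.Ψ₂ x y := by
  have := ld_nonpos_of_ae (volume : Measure (ℝ × ℝ)) (isOpen_Ioi.prod isOpen_Ioi)
    (lip_cont L.Ψ₂ L.lip2).neg (by
      filter_upwards [L.psi3] with p hp hpp
      have := (hp (le_of_lt hpp.1) (le_of_lt hpp.2)).2.1
      have := (le_max_right _ _).trans this
      simpa using this) (x, y) ⟨hx, hy⟩
  simpa using this

lemma psi12_nonpos (x y : ℝ) (hx : 0 < x) (hy : 0 < y) : L.Ψ₁₂ x y ≤ 0 := by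
  exact ld_nonpos_of_ae (volume : Measure (ℝ × ℝ)) (isOpen_Ioi.prod isOpen_Ioi)
    (lip_cont L.Ψ₁₂ L.lip12) (by
      filter_upwards [L.psi3] with p hp hpp
      have := (hp (le_of_lt hpp.1) (le_of_lt hpp.2)).2.2.1
      exact this.trans (min_le_right _ _)) (x, y) ⟨hx, hy⟩

lemma hasDeriv21 (x y : ℝ) (hx : 0 < x) (hy : 0 < y) :
    HasDerivAt (fun t => L.Ψ₂ t y) (L.Ψ₁₂ x y) x := by
  have hpos : ∀ t ∈ Ioo (x/2) (2*x), 0 < t := fun t ht => by linarith [ht.1]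
  refine hasDerivAt_of_tendstoUniformlyOn (l := 𝓝[>] (0:ℝ)) (s := Ioo (x/2) (2*x))
    (f := fun h t => h⁻¹ * (L.Ψ t (y+h) - L.Ψ t y))
    (f' := fun h t => h⁻¹ * (L.Ψ₁ t (y+h) - L.Ψ₁ t y))
    (g' := fun t => L.Ψ₁₂ t y) isOpen_Ioo ?_ ?_ ?_ ⟨by linarith, by linarith⟩
  · obtain ⟨C, hC⟩ := L.lip12 (Icc (x/2) (2*x) ×ˢ Icc y (y+1))
      (isCompact_Icc.prod isCompact_Icc) (by
        rintro ⟨u, v⟩ ⟨hu, hv⟩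
        exact ⟨lt_of_lt_of_le (by linarith) hu.1, lt_of_lt_of_le hy hv.1⟩)
    rw [Metric.tendstoUniformlyOn_iff]
    intro ε hε
    have hδ : 0 < min 1 (ε / (|C| + 1)) := by positivity
    filter_upwards [Ioo_mem_nhdsGT hδ] with h hh t ht
    have hh0 := hh.1
    have hh1 : h < 1 := hh.2.trans_le (min_le_left _ _)
    have hh2 : h < ε / (|C| + 1) := hh.2.trans_le (min_le_right _ _)
    have ht0 := hpos t ht
    obtain ⟨η, hη, he⟩ := exists_hasDerivAt_eq_slope (fun s => L.Ψ₁ t s) (fun s => L.Ψ₁₂ t s)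
      (a := y) (b := y + h) (by linarith)
      (fun s hs => (L.hasDeriv₁₂ t s ht0 (by linarith [hs.1])).continuousAt.continuousWithinAt)
      (fun s hs => L.hasDeriv₁₂ t s ht0 (by linarith [hs.1]))
    have e2 : h⁻¹ * (L.Ψ₁ t (y+h) - L.Ψ₁ t y) = L.Ψ₁₂ t η := by
      rw [he]; simp [div_eq_inv_mul]
    rw [e2, Real.dist_eq]
    have hb := hC (t, y) ⟨⟨ht.1.le, ht.2.le⟩, ⟨le_rfl, by linarith⟩⟩ (t, η)
      ⟨⟨ht.1.le, ht.2.le⟩, ⟨hη.1.le, by linarith [hη.2]⟩⟩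
    have hn : ‖((t, y) : ℝ × ℝ) - (t, η)‖ = η - y := by
      rw [Prod.mk_sub_mk, Prod.norm_mk, sub_self, norm_zero, max_eq_right (norm_nonneg _),
        Real.norm_eq_abs, abs_sub_comm, abs_of_pos (by linarith [hη.1])]
    rw [hn] at hb
    simp only at hb
    rw [lt_div_iff₀ (by positivity)] at hh2
    have h3 : C * (η - y) ≤ |C| * h :=
      mul_le_mul (le_abs_self C) (by linarith [hη.2]) (by linarith [hη.1]) (abs_nonneg _)
    nlinarith
  · filter_upwards [self_mem_nhdsWithin] with h hh t ht
    have hh : 0 < h := hh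
    exact ((L.hasDeriv₁ t (y+h) (hpos t ht) (by linarith)).sub
      (L.hasDeriv₁ t y (hpos t ht) hy)).const_mul _
  · intro t ht
    exact (L.hasDeriv₂ t y (hpos t ht) hy).tendsto_slope_zero_right

lemma ae_swap {P : ℝ × ℝ → Prop} (h : ∀ᵐ p ∂(volume : Measure (ℝ × ℝ)), P p) :
    ∀ᵐ p ∂(volume : Measure (ℝ × ℝ)), P p.swap :=
  (Measure.measurePreserving_swap (μ := (volume : Measure ℝ))
    (ν := (volume : Measure ℝ))).quasiMeasurePreserving.ae h

/-- The density with the two variables exchanged. -/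
def swap : LoadingDensity where
  Ψ a b := L.Ψ b a
  Ψ₁ a b := L.Ψ₂ b a
  Ψ₂ a b := L.Ψ₁ b a
  Ψ₁₁ a b := L.Ψ₂₂ b a
  Ψ₂₂ a b := L.Ψ₁₁ b a
  Ψ₁₂ a b := L.Ψ₁₂ b a
  Ψ₁₁₂ a b := L.Ψ₁₂₂ b a
  Ψ₁₂₂ a b := L.Ψ₁₁₂ b a
  nonneg a b ha hb := L.nonneg b a hb ha
  zero := L.zero
  bounded := by
    obtain ⟨M, hM⟩ := L.bounded
    exact ⟨M, fun a b ha hb => hM b a hb ha⟩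
  lipschitz := by
    obtain ⟨M, hM⟩ := L.lipschitz
    refine ⟨M, fun a b c d ha hb hc hd => ?_⟩
    rw [add_comm |a - c|]
    exact hM b a d c hb ha hd hc
  hasDeriv₁ a b ha hb := L.hasDeriv₂ b a hb ha
  hasDeriv₂ a b ha hb := L.hasDeriv₁ b a hb ha
  hasDeriv₁₂ a b ha hb := L.hasDeriv21 b a hb ha
  gradLocLip K hK hs := by
    obtain ⟨C, hC⟩ := L.gradLocLip (Prod.swap '' K) (hK.image continuous_swap) (by
      rintro _ ⟨p, hp, rfl⟩
      exact ⟨(hs hp).2, (hs hp).1⟩)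
    refine ⟨C, fun p hp q hq => ?_⟩
    have := hC p.swap ⟨p, hp, rfl⟩ q.swap ⟨q, hq, rfl⟩
    have hn : ‖p.swap - q.swap‖ = ‖p - q‖ := by
      rw [← Prod.swap_sub]
      simp [Prod.norm_def, max_comm]
    rw [hn] at this
    exact ⟨this.2.1, this.1, this.2.2⟩
  hasDeriv₁₁ := by
    filter_upwards [ae_swap L.hasDeriv₂₂] with p hp h1 h2 using hp h2 h1
  hasDeriv₂₂ := by
    filter_upwards [ae_swap L.hasDeriv₁₁] with p hp h1 h2 using hp h2 h1
  hasDeriv₁₁₂ := by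
    filter_upwards [ae_swap L.hasDeriv₁₂₂] with p hp h1 h2 using hp h2 h1
  hasDeriv₁₂₂ := by
    filter_upwards [ae_swap L.hasDeriv₁₁₂] with p hp h1 h2 using hp h2 h1
  psi3 := by
    filter_upwards [ae_swap L.psi3] with p hp h1 h2
    have := hp h2 h1
    exact ⟨this.2.1, this.1, this.2.2.2, this.2.2.1⟩
  psi4 := by
    obtain ⟨M, hM⟩ := L.psi4
    refine ⟨M, fun a b ha hb => ?_⟩
    rw [add_comm]
    exact hM b a hb ha

lemma phi_swap (y₁ y₂ z₁ z₂ : ℝ) : Phi L.swap y₁ y₂ z₁ z₂ = Phi L y₂ y₁ z₂ z₁ := by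
  unfold Phi swap
  by_cases h1 : z₁ ≤ y₁ <;> by_cases h2 : z₂ ≤ y₂ <;> simp only [h1, h2, if_true, if_false]
  ring

lemma ae_and_all
    (psi6 : ∀ᵐ p ∂(volume : Measure (ℝ × ℝ)), 0 ≤ p.1 → 0 ≤ p.2 →
      2 * L.Ψ₂₂ p.1 p.2 ≤ min (p.1 * L.Ψ₁₂₂ p.1 p.2) 0) :
    ∀ᵐ u ∂(volume : Measure ℝ), ∀ᵐ t ∂(volume : Measure ℝ), 0 < u → 0 < t →
      HasDerivAt (fun s => L.Ψ₂ u s) (L.Ψ₂₂ u t) t ∧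
      HasDerivAt (fun s => L.Ψ₁₂ u s) (L.Ψ₁₂₂ u t) t ∧
      2 * L.Ψ₂₂ u t ≤ min (u * L.Ψ₁₂₂ u t) 0 := by
  have : ∀ᵐ p ∂((volume : Measure ℝ).prod (volume : Measure ℝ)), 0 < p.1 → 0 < p.2 →
      HasDerivAt (fun s => L.Ψ₂ p.1 s) (L.Ψ₂₂ p.1 p.2) p.2 ∧
      HasDerivAt (fun s => L.Ψ₁₂ p.1 s) (L.Ψ₁₂₂ p.1 p.2) p.2 ∧
      2 * L.Ψ₂₂ p.1 p.2 ≤ min (p.1 * L.Ψ₁₂₂ p.1 p.2) 0 := by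
    rw [← Measure.volume_eq_prod]
    filter_upwards [psi6, L.hasDeriv₂₂, L.hasDeriv₁₂₂] with p h1 h2 h3 a b
    exact ⟨h2 a b, h3 a b, h1 a.le b.le⟩
  exact Measure.ae_ae_of_ae_prod this

lemma concave_aux
    (psi6 : ∀ᵐ p ∂(volume : Measure (ℝ × ℝ)), 0 ≤ p.1 → 0 ≤ p.2 →
      2 * L.Ψ₂₂ p.1 p.2 ≤ min (p.1 * L.Ψ₁₂₂ p.1 p.2) 0)
    (κ : ℝ) (hκ0 : 0 ≤ κ) (hκ : κ ≤ 1 / 2) (x : ℝ) (hx : 0 < x) :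
    ConcaveOn ℝ (Ioi 0) (fun t => L.Ψ x t - κ * x * L.Ψ₁ x t) := by
  have hd : ∀ t, 0 < t → HasDerivAt (fun t => L.Ψ x t - κ * x * L.Ψ₁ x t)
      (L.Ψ₂ x t - κ * x * L.Ψ₁₂ x t) t := fun t ht =>
    (L.hasDeriv₂ x t hx ht).sub ((L.hasDeriv₁₂ x t hx ht).const_mul _)
  have key : ∀ a b, 0 < a → a ≤ b →
      L.Ψ₂ x b - κ * x * L.Ψ₁₂ x b ≤ L.Ψ₂ x a - κ * x * L.Ψ₁₂ x a := by
    intro a b ha hab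
    have hsec : ∀ f : ℝ → ℝ → ℝ, ContinuousOn (fun p : ℝ × ℝ => f p.1 p.2)
        (Ioi (0:ℝ) ×ˢ Ioi (0:ℝ)) → ∀ c, 0 < c → ContinuousOn (fun u => f u c) (Ioi 0) := by
      intro f hf c hc
      exact hf.comp (f := fun u : ℝ => (u, c)) (by fun_prop) (fun u hu => ⟨hu, hc⟩)
    have c2 := hsec _ (lip_cont L.Ψ₂ L.lip2)
    have c12 := hsec _ (lip_cont L.Ψ₁₂ L.lip12)
    have hb : 0 < b := ha.trans_le hab
    have hall := ae_and_all L psi6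
    have := ld_nonpos_of_ae (volume : Measure ℝ) (s := Ioi (0:ℝ)) isOpen_Ioi
      (f := fun u => (L.Ψ₂ u b - κ * u * L.Ψ₁₂ u b) - (L.Ψ₂ u a - κ * u * L.Ψ₁₂ u a))
      (((c2 b hb).sub ((continuousOn_const.mul continuousOn_id).mul (c12 b hb))).sub
        ((c2 a ha).sub ((continuousOn_const.mul continuousOn_id).mul (c12 a ha)))) ?_ x hx
    · simpa using this
    filter_upwards [hall] with u hu hu0
    have hu0 : 0 < u := hu0
    have hac : AbsolutelyContinuousOnInterval (fun t => L.Ψ₂ u t - κ * u * L.Ψ₁₂ u t) a b :=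
      (lip_sec _ L.lip2 u a b hu0 ha hab).sub ((lip_sec _ L.lip12 u a b hu0 ha hab).const_mul _)
    rw [← hac.integral_deriv_eq_sub]
    rw [intervalIntegral.integral_of_le hab]
    apply setIntegral_nonpos_of_ae_restrict
    rw [EventuallyLE, ae_restrict_iff' measurableSet_Ioc]
    filter_upwards [hu] with t ht htm
    have ht0 : 0 < t := ha.trans htm.1
    obtain ⟨h1, h2, h3⟩ := ht hu0 ht0
    have hD : HasDerivAt (fun t => L.Ψ₂ u t - κ * u * L.Ψ₁₂ u t)
      (L.Ψ₂₂ u t - κ * u * L.Ψ₁₂₂ u t) t := h1.sub (h2.const_mul (κ * u))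
    rw [hD.deriv]
    have h4 := h3.trans (min_le_left _ _)
    have h5 := h3.trans (min_le_right _ _)
    simp only [Pi.zero_apply]
    rcases le_total 0 (u * L.Ψ₁₂₂ u t) with h | h <;> nlinarith
  refine AntitoneOn.concaveOn_of_deriv (convex_Ioi 0)
    (fun t ht => (hd t ht).continuousAt.continuousWithinAt) ?_ ?_
  · rw [interior_Ioi]
    exact fun t ht => (hd t ht).differentiableAt.differentiableWithinAt
  · rw [interior_Ioi]
    intro a ha b hb hab
    rw [(hd a ha).deriv, (hd b hb).deriv]
    exact key a b ha hab

lemma half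
    (psi6 : ∀ᵐ p ∂(volume : Measure (ℝ × ℝ)), 0 ≤ p.1 → 0 ≤ p.2 →
      2 * L.Ψ₂₂ p.1 p.2 ≤ min (p.1 * L.Ψ₁₂₂ p.1 p.2) 0)
    (z₁ z₂ : ℝ) (hz₁ : 0 < z₁) (hz₂ : 0 < z₂) (y₁ : ℝ) (hy : 0 ≤ y₁) :
      ConvexOn ℝ (Ico 0 z₂) (fun t => Phi L y₁ t z₁ z₂) ∧
      (∃ a b c : ℝ, ∀ t ∈ Ico (0:ℝ) z₂, Phi L y₁ t z₁ z₂ = a * t ^ 2 + b * t + c) ∧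
      ConcaveOn ℝ (Ici z₂) (fun t => Phi L y₁ t z₁ z₂) := by
  have hc1 : 0 ≤ 1 - (y₁ / z₁) ^ 2 ∨ z₁ ≤ y₁ := by
    rcases le_or_gt z₁ y₁ with h | h
    · exact Or.inr h
    · left
      have h1 : y₁ / z₁ ≤ 1 := (div_le_one hz₁).2 h.le
      have h0 : 0 ≤ y₁ / z₁ := by positivity
      nlinarith
  have hq : ∃ a c : ℝ, 0 ≤ a ∧ ∀ t ∈ Ico (0:ℝ) z₂, Phi L y₁ t z₁ z₂ = a * t ^ 2 + c := by
    by_cases h : z₁ ≤ y₁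
    · refine ⟨L.Ψ₂ y₁ z₂ / (2 * z₂), L.Ψ y₁ z₂ - z₂ / 2 * L.Ψ₂ y₁ z₂,
        div_nonneg (L.psi2_nonneg _ _ (hz₁.trans_le h) hz₂) (by positivity), fun t ht => ?_⟩
      simp only [Phi, h, not_le.2 ht.2, if_true, if_false]
      field_simp
      ring
    · have hc := hc1.resolve_right h
      refine ⟨L.Ψ₂ z₁ z₂ / (2 * z₂) + z₁ / (4 * z₂) * (-L.Ψ₁₂ z₁ z₂) * (1 - (y₁ / z₁) ^ 2),
        L.Ψ z₁ z₂ - z₁ / 2 * L.Ψ₁ z₁ z₂ * (1 - (y₁ / z₁) ^ 2) - z₂ / 2 * L.Ψ₂ z₁ z₂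
          + z₁ * z₂ / 4 * L.Ψ₁₂ z₁ z₂ * (1 - (y₁ / z₁) ^ 2), ?_, fun t ht => ?_⟩
      · have h1 := L.psi2_nonneg z₁ z₂ hz₁ hz₂
        have h2 : 0 ≤ -L.Ψ₁₂ z₁ z₂ := by linarith [L.psi12_nonpos z₁ z₂ hz₁ hz₂]
        positivity
      · simp only [Phi, h, not_le.2 ht.2, if_false]
        generalize 1 - (y₁ / z₁) ^ 2 = c
        field_simp
        ring
  obtain ⟨a, c, ha, hac⟩ := hq
  refine ⟨?_, ⟨a, 0, c, fun t ht => by rw [hac t ht]; ring⟩, ?_⟩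
  · have : ConvexOn ℝ (Ico 0 z₂) (fun t : ℝ => a * t ^ 2 + c) := by
      have h1 : ConvexOn ℝ (Ico 0 z₂) (fun t : ℝ => t ^ 2) :=
        (even_two.convexOn_pow (𝕜 := ℝ)).subset (subset_univ _) (convex_Ico _ _)
      exact (h1.smul ha).add_const c
    exact this.congr fun t ht => (hac t ht).symm
  · by_cases h : z₁ ≤ y₁
    · refine ((L.concave_aux psi6 0 le_rfl (by norm_num) y₁ (hz₁.trans_le h)).subset
        (Ici_subset_Ioi.2 hz₂) (convex_Ici _)).congr fun t ht => ?_
      have ht : z₂ ≤ t := ht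
      simp [Phi, h, ht]
    · have hc := hc1.resolve_right h
      refine ((L.concave_aux psi6 ((1 - (y₁ / z₁) ^ 2) / 2) (by positivity)
        (by linarith [sq_nonneg (y₁ / z₁)]) z₁ hz₁).subset
        (Ici_subset_Ioi.2 hz₂) (convex_Ici _)).congr fun t ht => ?_
      have ht : z₂ ≤ t := ht
      simp only [Phi, h, ht, if_true, if_false]
      ring

end LoadingDensity

/-- under the additional assumption (Ψ6), for fixed `z₁,z₂ > 0` and each fixed
value of the other variable, `Φ` is convex and quadratic in `y_l` on the unloading zone
`0 ≤ y_l < z_l`, and concave in `y_l` on the loading zone `y_l ≥ z_l`. -/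
theorem statement5 (L : LoadingDensity)
    (psi6 : ∀ᵐ p ∂(volume : Measure (ℝ × ℝ)), 0 ≤ p.1 → 0 ≤ p.2 →
      2 * L.Ψ₁₁ p.1 p.2 ≤ min (p.2 * L.Ψ₁₁₂ p.1 p.2) 0 ∧
      2 * L.Ψ₂₂ p.1 p.2 ≤ min (p.1 * L.Ψ₁₂₂ p.1 p.2) 0)
    (z₁ z₂ : ℝ) (hz₁ : 0 < z₁) (hz₂ : 0 < z₂) :
    (∀ y₂ : ℝ, 0 ≤ y₂ →
      ConvexOn ℝ (Ico 0 z₁) (fun t => Phi L t y₂ z₁ z₂) ∧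
      (∃ a b c : ℝ, ∀ t ∈ Ico (0:ℝ) z₁, Phi L t y₂ z₁ z₂ = a * t ^ 2 + b * t + c) ∧
      ConcaveOn ℝ (Ici z₁) (fun t => Phi L t y₂ z₁ z₂)) ∧
    (∀ y₁ : ℝ, 0 ≤ y₁ →
      ConvexOn ℝ (Ico 0 z₂) (fun t => Phi L y₁ t z₁ z₂) ∧
      (∃ a b c : ℝ, ∀ t ∈ Ico (0:ℝ) z₂, Phi L y₁ t z₁ z₂ = a * t ^ 2 + b * t + c) ∧
      ConcaveOn ℝ (Ici z₂) (fun t => Phi L y₁ t z₁ z₂)) := by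
  refine ⟨fun y₂ hy => ?_, fun y₁ hy => L.half ?_ z₁ z₂ hz₁ hz₂ y₁ hy⟩
  · have := L.swap.half (by
      filter_upwards [LoadingDensity.ae_swap psi6] with p hp h1 h2
      exact (hp h2 h1).1) z₂ z₁ hz₂ hz₁ y₂ hy
    simpa only [LoadingDensity.phi_swap] using this
  · filter_upwards [psi6] with p hp h1 h2 using (hp h1 h2).2
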